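/- A non-polynomial homogeneous contact form of weight zero on the cylinder: let U = {(z, p, q) ∈ ℝ³ : p² + q² < 1} and let α be the smooth 1-form α = dz − p·(2 + sin(pq)) dq on U (components (α_z, α_p, α_q) = (1, 0, −p(2 + sin(pq)))). Then: (i) α is a contact form on U; concretely, dα = −(2 + sin(pq) + pq·cos(pq)) dp ∧ dq, the scalar 2 + sin(pq) + pq·cos(pq) is strictly positive at every point of U (so at every point the flat map v ↦ dα(v,·) has rank 2 and α is not in its image); and (ii) α is homogeneous of weight 0 with respect to the diagonal weight vector field ∇ = p∂_p − q∂_q, i.e., assigning weights (0, 1, −1) to the coordinates (z, p, q). -/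

import Mathlib

/-- The exterior derivative of the 1-form `α` at `x`, as a bilinear "flat" map:
`flat α x u v = dα_x(u, v) = (Dα(x)u)(v) − (Dα(x)v)(u)`. -/
noncomputable def flat {n : ℕ} (α : (Fin n → ℝ) → (Fin n → ℝ) →L[ℝ] ℝ)
    (x : Fin n → ℝ) : (Fin n → ℝ) →L[ℝ] (Fin n → ℝ) →L[ℝ] ℝ :=
  fderiv ℝ α x - (fderiv ℝ α x).flip

/-- The 1-form `α = dz − p(2 + sin(pq)) dq` on `ℝ³` with coordinates
`(z, p, q) = (x 0, x 1, x 2)`. -/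
noncomputable def alphaC (x : Fin 3 → ℝ) : (Fin 3 → ℝ) →L[ℝ] ℝ :=
  ContinuousLinearMap.proj (R := ℝ) (φ := fun _ : Fin 3 => ℝ) 0
    - (x 1 * (2 + Real.sin (x 1 * x 2))) •
        ContinuousLinearMap.proj (R := ℝ) (φ := fun _ : Fin 3 => ℝ) 2

/-!
`α = β - f γ` with constant covectors `β`, `γ` has `dα = γ ∧ df`, and where this is nonzero the
image of `v ↦ dα (v, ·)` is the plane spanned by `γ` and `df`. For `α = dz - f dq` with
`f = p (2 + sin (p q))` one gets `dα = -(∂f/∂p) dp ∧ dq`, where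
`∂f/∂p = 2 + sin t + t cos t` at `t = p q`, which is positive since `|t| < 1` on the cylinder.
The vector `∂_z` lies in the kernel of `dα` and `α (∂_z) = 1`, so `α` is not in the image. Finally,
`f` has weight `1` as `p q` has weight `0`, so `f dq` has weight `1 - 1 = 0`.
-/

open Real

section Wedge

variable {𝕜 E : Type*} [NontriviallyNormedField 𝕜] [NormedAddCommGroup E] [NormedSpace 𝕜 E]

/-- The wedge product `φ ∧ ψ` of two covectors, curried as the map `u ↦ φ u • ψ - ψ u • φ`, in the
normalization `(φ ∧ ψ) (u, v) = φ u * ψ v - ψ u * φ v`. -/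
noncomputable def wedge (φ ψ : E →L[𝕜] 𝕜) : E →L[𝕜] E →L[𝕜] 𝕜 :=
  φ.smulRight ψ - ψ.smulRight φ

theorem wedge_apply (φ ψ : E →L[𝕜] 𝕜) (u : E) : wedge φ ψ u = φ u • ψ - ψ u • φ := rfl

theorem wedge_apply_apply (φ ψ : E →L[𝕜] 𝕜) (u v : E) :
    wedge φ ψ u v = φ u * ψ v - ψ u * φ v := rfl

variable {φ ψ : E →L[𝕜] 𝕜} {u v : E}

theorem wedge_apply_contraction_left :
    wedge φ ψ (φ u • v - φ v • u) = -(wedge φ ψ u v) • φ := by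
  ext w
  simp only [map_sub, map_smul, sub_apply, smul_apply, smul_eq_mul, wedge_apply_apply]
  ring

theorem wedge_apply_contraction_right :
    wedge φ ψ (ψ u • v - ψ v • u) = -(wedge φ ψ u v) • ψ := by
  ext w
  simp only [map_sub, map_smul, sub_apply, smul_apply, smul_eq_mul, wedge_apply_apply]
  ring

/-- Contracting with `φ u • v - φ v • u` recovers `φ` up to the nonzero factor `-(φ ∧ ψ) (u, v)`,
and likewise for `ψ`. -/
theorem range_wedge (h : wedge φ ψ u v ≠ 0) :
    LinearMap.range (wedge φ ψ).toLinearMap = Submodule.span 𝕜 {φ, ψ} := by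
  apply le_antisymm
  · rintro _ ⟨w, rfl⟩
    exact Submodule.mem_span_pair.2 ⟨-ψ w, φ w, by
      rw [ContinuousLinearMap.coe_coe, wedge_apply]; module⟩
  · have hneg : -(wedge φ ψ u v) ≠ 0 := neg_ne_zero.2 h
    rw [Submodule.span_le, Set.pair_subset_iff]
    exact ⟨(Submodule.smul_mem_iff _ hneg).1 ⟨_, wedge_apply_contraction_left⟩,
      (Submodule.smul_mem_iff _ hneg).1 ⟨_, wedge_apply_contraction_right⟩⟩

theorem linearIndependent_pair_of_wedge_ne_zero (h : wedge φ ψ u v ≠ 0) :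
    LinearIndependent 𝕜 ![φ, ψ] := by
  rw [LinearIndependent.pair_iff]
  intro s t hst
  have hu : s * φ u + t * ψ u = 0 := DFunLike.congr_fun hst u
  have hv : s * φ v + t * ψ v = 0 := DFunLike.congr_fun hst v
  rw [wedge_apply_apply] at h
  constructor
  · exact (mul_eq_zero.1 (by linear_combination ψ v * hu - ψ u * hv)).resolve_right h
  · exact (mul_eq_zero.1 (by linear_combination φ u * hv - φ v * hu)).resolve_right h

theorem finrank_range_wedge (h : wedge φ ψ u v ≠ 0) :
    Module.finrank 𝕜 (LinearMap.range (wedge φ ψ).toLinearMap) = 2 := by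
  rw [range_wedge h, ← Matrix.range_cons_cons_empty,
    finrank_span_eq_card (linearIndependent_pair_of_wedge_ne_zero h), Fintype.card_fin]

end Wedge

section Flat

variable {n : ℕ} {α : (Fin n → ℝ) → (Fin n → ℝ) →L[ℝ] ℝ} {x : Fin n → ℝ}

theorem flat_apply (u v : Fin n → ℝ) :
    flat α x u v = fderiv ℝ α x u v - fderiv ℝ α x v u := rfl

theorem flat_swap (u v : Fin n → ℝ) : flat α x u v = -flat α x v u := by
  rw [flat_apply, flat_apply, neg_sub]

theorem notMem_range_flat_of_flat_eq_zero {ξ : Fin n → ℝ} (hξ : flat α x ξ = 0)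
    (hα : α x ξ ≠ 0) : α x ∉ Set.range (flat α x) := by
  rintro ⟨v, hv⟩
  apply hα
  rw [← hv, flat_swap, hξ, zero_apply, neg_zero]

end Flat

/-- Homogeneity of weight `r` at the point `x` of the 1-form `α`, with respect to the diagonal
weight vector field `y ↦ w * y` on `ℝⁿ`. The component equations are those with `v` a basis
vector. -/
def IsHomogeneousAt {n : ℕ} (w : Fin n → ℝ) (r : ℝ) (α : (Fin n → ℝ) → (Fin n → ℝ) →L[ℝ] ℝ)
    (x : Fin n → ℝ) : Prop :=
  ∀ v, fderiv ℝ α x (w * x) v + α x (w * v) = r * α x v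

section ConstSubSmul

variable {E : Type*} [NormedAddCommGroup E] [NormedSpace ℝ E]

theorem fderiv_const_sub_smul_apply (β γ : E →L[ℝ] ℝ) {f : E → ℝ} {x : E}
    (hf : DifferentiableAt ℝ f x) (u v : E) :
    fderiv ℝ (fun y => β - f y • γ) x u v = -(fderiv ℝ f x u * γ v) := by
  rw [((hf.hasFDerivAt.smul_const γ).const_sub β).fderiv]
  rfl

variable {n : ℕ} {f : (Fin n → ℝ) → ℝ} {x : Fin n → ℝ}

theorem flat_const_sub_smul (β γ : (Fin n → ℝ) →L[ℝ] ℝ) (hf : DifferentiableAt ℝ f x) :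
    flat (fun y => β - f y • γ) x = wedge γ (fderiv ℝ f x) := by
  ext1 u
  ext1 v
  rw [flat_apply, fderiv_const_sub_smul_apply β γ hf, fderiv_const_sub_smul_apply β γ hf,
    wedge_apply_apply]
  ring

theorem isHomogeneousAt_proj_sub_smul_proj {w : Fin n → ℝ} {i k : Fin n}
    (hf : DifferentiableAt ℝ f x) (hweight : fderiv ℝ f x (w * x) = (w i - w k) * f x) :
    IsHomogeneousAt w (w i) (fun y => .proj i - f y • .proj k) x := by
  intro v
  rw [fderiv_const_sub_smul_apply _ _ hf, hweight]
  simp only [sub_apply, smul_apply, ContinuousLinearMap.proj_apply, Pi.mul_apply, smul_eq_mul]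
  ring

end ConstSubSmul

section Cylinder

theorem two_add_sin_add_mul_cos_pos {t : ℝ} (ht : |t| < 1) : 0 < 2 + sin t + t * cos t := by
  have hcos : |t * cos t| < 1 := by
    rw [abs_mul]
    exact (mul_le_of_le_one_right (abs_nonneg t) (abs_cos_le_one t)).trans_lt ht
  linarith [neg_one_le_sin t, (abs_lt.1 hcos).1]

theorem abs_mul_lt_one_of_sq_add_sq_lt_one {p q : ℝ} (h : p ^ 2 + q ^ 2 < 1) : |p * q| < 1 := by
  rw [abs_lt]
  constructor <;> nlinarith [sq_nonneg (p + q), sq_nonneg (p - q)]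

/-- The function `f = p (2 + sin (p q))` with `alphaC = dz - f dq`, in the coordinates
`(z, p, q) = (x 0, x 1, x 2)`. -/
noncomputable def alphaCoeff (x : Fin 3 → ℝ) : ℝ :=
  x 1 * (2 + sin (x 1 * x 2))

theorem alphaC_eq : alphaC = fun x => .proj 0 - alphaCoeff x • .proj 2 := rfl

variable (x : Fin 3 → ℝ)

theorem differentiableAt_alphaCoeff : DifferentiableAt ℝ alphaCoeff x := by
  unfold alphaCoeff
  fun_prop

theorem fderiv_alphaCoeff_apply (u : Fin 3 → ℝ) :
    fderiv ℝ alphaCoeff x u =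
      (2 + sin (x 1 * x 2) + x 1 * x 2 * cos (x 1 * x 2)) * u 1
        + x 1 ^ 2 * cos (x 1 * x 2) * u 2 := by
  have hp := hasFDerivAt_apply (𝕜 := ℝ) 1 x
  have hq := hasFDerivAt_apply (𝕜 := ℝ) 2 x
  have hf : HasFDerivAt alphaCoeff _ x := hp.mul ((hp.mul hq).sin.const_add 2)
  rw [hf.fderiv]
  simp only [add_apply, smul_apply, ContinuousLinearMap.proj_apply, smul_eq_mul, Pi.mul_apply]
  ring

theorem fderiv_alphaCoeff_weight :
    fderiv ℝ alphaCoeff x (![0, 1, -1] * x) = alphaCoeff x := by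
  rw [fderiv_alphaCoeff_apply, alphaCoeff]
  simp only [Pi.mul_apply, Matrix.cons_val]
  ring

theorem flat_alphaC :
    flat alphaC x = wedge (ContinuousLinearMap.proj (R := ℝ) 2) (fderiv ℝ alphaCoeff x) := by
  rw [alphaC_eq]
  exact flat_const_sub_smul _ _ (differentiableAt_alphaCoeff x)

theorem flat_alphaC_apply (u v : Fin 3 → ℝ) :
    flat alphaC x u v =
      -(2 + sin (x 1 * x 2) + x 1 * x 2 * cos (x 1 * x 2)) * (u 1 * v 2 - u 2 * v 1) := by
  rw [flat_alphaC, wedge_apply_apply, fderiv_alphaCoeff_apply, fderiv_alphaCoeff_apply]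
  simp only [ContinuousLinearMap.proj_apply]
  ring

theorem finrank_range_flat_alphaC
    (hx : 2 + sin (x 1 * x 2) + x 1 * x 2 * cos (x 1 * x 2) ≠ 0) :
    Module.finrank ℝ (LinearMap.range (flat alphaC x).toLinearMap) = 2 := by
  have hne : flat alphaC x (Pi.single 1 1) (Pi.single 2 1) ≠ 0 := by
    rw [flat_alphaC_apply]
    simpa using neg_ne_zero.2 hx
  rw [flat_alphaC] at hne ⊢
  exact finrank_range_wedge hne

theorem alphaC_notMem_range_flat : alphaC x ∉ Set.range (flat alphaC x) := by
  have hker : flat alphaC x (Pi.single 0 1) = 0 := by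
    ext1 v
    simp [flat_alphaC_apply]
  exact notMem_range_flat_of_flat_eq_zero hker (by simp [alphaC])

theorem isHomogeneousAt_alphaC : IsHomogeneousAt ![0, 1, -1] 0 alphaC x := by
  have hweight : fderiv ℝ alphaCoeff x (![0, 1, -1] * x) = (0 - -1) * alphaCoeff x := by
    rw [fderiv_alphaCoeff_weight, zero_sub, neg_neg, one_mul]
  rw [alphaC_eq]
  exact isHomogeneousAt_proj_sub_smul_proj (w := ![0, 1, -1]) (i := 0) (k := 2)
    (differentiableAt_alphaCoeff x) hweight

end Cylinder

/-- On the cylinder `U = {(z,p,q) : p² + q² < 1} ⊆ ℝ³`, the 1-form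
`α = dz − p(2 + sin(pq)) dq` is a contact form: its differential is
`dα = −(2 + sin(pq) + pq cos(pq)) dp ∧ dq` with the scalar factor strictly positive,
the flat map has rank `2` with `α` not in its image; moreover `α` is homogeneous of
weight `0` with respect to `∇ = p∂_p − q∂_q`, i.e. for weights `(0, 1, −1)` of
`(z, p, q)`. -/
theorem stmt_19 :
    ∀ x : Fin 3 → ℝ, (x 1) ^ 2 + (x 2) ^ 2 < 1 →
      (0 < 2 + Real.sin (x 1 * x 2) + x 1 * x 2 * Real.cos (x 1 * x 2)) ∧
      (∀ u v : Fin 3 → ℝ, flat alphaC x u v =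
        -(2 + Real.sin (x 1 * x 2) + x 1 * x 2 * Real.cos (x 1 * x 2))
          * (u 1 * v 2 - u 2 * v 1)) ∧
      Module.finrank ℝ (LinearMap.range (flat alphaC x).toLinearMap) = 2 ∧
      alphaC x ∉ Set.range (fun v => flat alphaC x v) ∧
      (∀ v : Fin 3 → ℝ,
        fderiv ℝ alphaC x (fun j => ![(0:ℝ), 1, -1] j * x j) v
          + alphaC x (fun j => ![(0:ℝ), 1, -1] j * v j) = 0) := by
  intro x hx
  have hpos := two_add_sin_add_mul_cos_pos (abs_mul_lt_one_of_sq_add_sq_lt_one hx)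
  exact ⟨hpos, flat_alphaC_apply x, finrank_range_flat_alphaC x hpos.ne',
    alphaC_notMem_range_flat x, fun v => (isHomogeneousAt_alphaC x v).trans (zero_mul _)⟩
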